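/- Let SU(2) act on V = sl₂(ℂ) ⊕ ℂ² by g·(A, v) = (gAg⁻¹, gv), where sl₂(ℂ) is the space of traceless complex 2×2 matrices. Then the real vector space of SU(2)-invariant quadratic forms on V (viewed as a real vector space of dimension 10) has dimension exactly 4. -/

import Mathlib

/-!
Statement 9: The real vector space of SU(2)-invariant quadratic forms on
`V = sl₂(ℂ) ⊕ ℂ²` (real dimension 10), with action `g·(A,v) = (gAg⁻¹, gv)`, has dimension
exactly 4.  Here `sl₂(ℂ)` is identified with `ℂ³` via the linear coordinates
`c ↦ !![c 0, c 1; c 2, -c 0]` on the traceless complex 2×2 matrices.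
-/

namespace Stmt9

/-- `V ≅ sl₂(ℂ) ⊕ ℂ²` in coordinates: `ℂ³` parametrizes the traceless matrices. -/
abbrev V : Type := (Fin 3 → ℂ) × (Fin 2 → ℂ)

/-- The traceless complex 2×2 matrix with coordinates `c`. -/
def mat (c : Fin 3 → ℂ) : Matrix (Fin 2) (Fin 2) ℂ :=
  !![c 0, c 1; c 2, -(c 0)]

/-- A quadratic form `q` on (the underlying 10-dimensional real vector space of)
`V = sl₂(ℂ) ⊕ ℂ²` is SU(2)-invariant if `q(gAg⁻¹, gv) = q(A,v)` for all
`g ∈ SU(2)` (unitary of determinant 1). -/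
def IsInvariant (q : QuadraticForm ℝ V) : Prop :=
  ∀ g : Matrix (Fin 2) (Fin 2) ℂ, g ∈ Matrix.unitaryGroup (Fin 2) ℂ → g.det = 1 →
    ∀ x y : V, mat y.1 = g * mat x.1 * g⁻¹ → y.2 = g.mulVec x.2 → q y = q x

/-- The submodule of SU(2)-invariant quadratic forms on `V`. -/
noncomputable def invQF : Submodule ℝ (QuadraticForm ℝ V) where
  carrier := {q | IsInvariant q}
  add_mem' := by
    intro q r hq hr g hg hdet x y h1 h2
    simp only [QuadraticMap.add_apply, hq g hg hdet x y h1 h2, hr g hg hdet x y h1 h2]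
  zero_mem' := by
    intro g hg hdet x y _ _
    simp only [QuadraticMap.zero_apply]
  smul_mem' := by
    intro c q hq g hg hdet x y h1 h2
    simp only [QuadraticMap.smul_apply, hq g hg hdet x y h1 h2]

/-!
The quaternion group `{±1, ±iσ₁, ±iσ₂, ±iσ₃} ⊂ SU(2)`, where the `σᵢ` are the Pauli matrices, acts
on the summands of `V = ℂσ₁ ⊕ ℂσ₂ ⊕ ℂσ₃ ⊕ ℂ²`: the central element `-1` is trivial on the three
lines and `-1` on `ℂ²`, and the lines carry three distinct sign characters. An invariant form is
therefore the sum of its restrictions to the four summands. The three lines are conjugate under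
SU(2), which is moreover transitive on the rays of `ℂ²`, so the form is determined by its
restriction `α|z|² + Re(βz²)` to `ℂσ₃` and its value at one vector of `ℂ²`. All `1 + 2 + 1` real
parameters are realized by the forms `α tr(AᴴA) + Re(β tr A²) + δ|v|²`.
-/

open ComplexConjugate Matrix

section QuadraticMaps

lemma map_add_eq_of_map_sub_eq {R M N : Type*} [CommRing R] [AddCommGroup M] [AddCommGroup N]
    [Module R M] [Module R N] [IsAddTorsionFree N] (q : QuadraticMap R M N) {x y : M}
    (h : q (x - y) = q (x + y)) : q (x + y) = q x + q y := by
  have polar_eq_neg : QuadraticMap.polar q x y = -QuadraticMap.polar q x y := by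
    rw [← QuadraticMap.polar_neg_right, QuadraticMap.polar, QuadraticMap.polar,
      QuadraticMap.map_neg, ← sub_eq_add_neg, h]
  rw [QuadraticMap.map_add q, self_eq_neg.mp polar_eq_neg, add_zero]

lemma exists_map_complex_smul_eq {M : Type*} [AddCommGroup M] [Module ℝ M] [Module ℂ M]
    [IsScalarTower ℝ ℂ M] (q : QuadraticForm ℝ M) (m : M) :
    ∃ (α : ℝ) (β : ℂ), ∀ z : ℂ, q (z • m) = α * Complex.normSq z + (β * z ^ 2).re := by
  set p := QuadraticMap.polar q m (Complex.I • m)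
  refine ⟨(q m + q (Complex.I • m)) / 2, ⟨(q m - q (Complex.I • m)) / 2, -p / 2⟩, fun z => ?_⟩
  have smul_eq : z • m = z.re • m + z.im • Complex.I • m := by
    rw [← algebraMap_smul ℂ z.re m, ← algebraMap_smul ℂ z.im (Complex.I • m), ← mul_smul,
      ← add_smul, Complex.coe_algebraMap, Complex.re_add_im]
  rw [smul_eq, QuadraticMap.map_add q, QuadraticMap.map_smul, QuadraticMap.map_smul,
    QuadraticMap.polar_smul_left, QuadraticMap.polar_smul_right]
  simp only [smul_eq_mul, Complex.normSq_apply, pow_two, Complex.mul_re, Complex.mul_im]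
  ring

end QuadraticMaps

section TraceForms

variable {m n : Type*} [Fintype m] [Fintype n] {R S : Type*} [CommSemiring R]

variable (m n) in
/-- The squared Frobenius norm `A ↦ tr(AᴴA)` of complex matrices, as a real quadratic form. Matrices
with a single column are included so that it also provides the squared Hermitian norm on `ℂᵐ`. -/
noncomputable def frobeniusForm : QuadraticForm ℝ (Matrix m n ℂ) :=
  LinearMap.BilinMap.toQuadraticMap <|
    LinearMap.mk₂ ℝ (fun A B => (Aᴴ * B).trace.re)
      (fun A A' B => by simp [Matrix.add_mul])
      (fun r A B => by simp)
      (fun A B B' => by simp [Matrix.mul_add])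
      (fun r A B => by simp)

lemma frobeniusForm_apply (A : Matrix m n ℂ) : frobeniusForm m n A = (Aᴴ * A).trace.re := rfl

lemma frobeniusForm_unitary_mul [DecidableEq m] {g : Matrix m m ℂ} (hg : g ∈ unitaryGroup m ℂ)
    (A : Matrix m n ℂ) : frobeniusForm m n (g * A) = frobeniusForm m n A := by
  have star_mul_self : gᴴ * g = 1 := mem_unitaryGroup_iff'.mp hg
  rw [frobeniusForm_apply, frobeniusForm_apply, conjTranspose_mul, Matrix.mul_assoc,
    ← Matrix.mul_assoc gᴴ, star_mul_self, Matrix.one_mul]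

lemma frobeniusForm_mul_unitary [DecidableEq n] {g : Matrix n n ℂ} (hg : g ∈ unitaryGroup n ℂ)
    (A : Matrix m n ℂ) : frobeniusForm m n (A * g) = frobeniusForm m n A := by
  have mul_star_self : g * gᴴ = 1 := mem_unitaryGroup_iff.mp hg
  rw [frobeniusForm_apply, frobeniusForm_apply, conjTranspose_mul, Matrix.mul_assoc, trace_mul_comm,
    Matrix.mul_assoc, Matrix.mul_assoc, mul_star_self, Matrix.mul_one]

lemma frobeniusForm_eq_sum_normSq (A : Matrix m n ℂ) :
    frobeniusForm m n A = ∑ j, ∑ i, Complex.normSq (A i j) := by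
  simp [frobeniusForm_apply, trace, Matrix.mul_apply, Complex.normSq_apply]

variable (n R S) in
/-- The trace form `A ↦ tr(A²)` on square matrices over an `R`-algebra `S`, as an `S`-valued
quadratic map over `R`. On traceless `2 × 2` matrices it is `-2 det`. -/
def traceSq [Semiring S] [Algebra R S] : QuadraticMap R (Matrix n n S) S :=
  LinearMap.BilinMap.toQuadraticMap ((LinearMap.mul R _).compr₂ (traceLinearMap n R S))

lemma traceSq_apply [Semiring S] [Algebra R S] (A : Matrix n n S) :
    traceSq n R S A = (A * A).trace := rfl

lemma traceSq_conj [DecidableEq n] [CommRing S] [Algebra R S] {g : Matrix n n S} (hg : IsUnit g)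
    (A : Matrix n n S) :
    traceSq n R S (g * A * g⁻¹) = traceSq n R S A := by
  have sq_conj : g * A * g⁻¹ * (g * A * g⁻¹) = g * (A * A) * g⁻¹ := by
    simp only [Matrix.mul_assoc, nonsing_inv_mul_cancel_left _ _ ((isUnit_iff_isUnit_det g).mp hg)]
  rw [traceSq_apply, traceSq_apply, sq_conj, trace_conj hg]

end TraceForms

section InvariantForms

/-- `mat` as a real linear map. -/
def matLinear : (Fin 3 → ℂ) →ₗ[ℝ] Matrix (Fin 2) (Fin 2) ℂ where
  toFun := mat
  map_add' c d := by ext i j; fin_cases i <;> fin_cases j <;> simp [mat, add_comm]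
  map_smul' r c := by ext i j; fin_cases i <;> fin_cases j <;> simp [mat]

lemma mat_zero : mat 0 = 0 := map_zero matLinear

/-- `Matrix.replicateCol Unit` as a real linear map; it embeds `ℂⁿ` as the matrices with a single
column. -/
def colLinear {n : Type*} : (n → ℂ) →ₗ[ℝ] Matrix n Unit ℂ where
  toFun := replicateCol Unit
  map_add' := replicateCol_add
  map_smul' := replicateCol_smul

/-- The form `α tr(AᴴA) + Re(β tr A²) + δ|v|²` on `sl₂(ℂ) ⊕ ℂ²`, as a linear function of its
coefficients `(α, β, δ)`. -/
noncomputable def invariantForm : ℝ × ℂ × ℝ →ₗ[ℝ] QuadraticForm ℝ V where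
  toFun p :=
    p.1 • (frobeniusForm (Fin 2) (Fin 2)).comp (matLinear ∘ₗ LinearMap.fst ℝ _ _) +
    (Complex.reLm ∘ₗ LinearMap.mul ℝ ℂ p.2.1).compQuadraticMap
      ((traceSq (Fin 2) ℝ ℂ).comp (matLinear ∘ₗ LinearMap.fst ℝ _ _)) +
    p.2.2 • (frobeniusForm (Fin 2) Unit).comp (colLinear ∘ₗ LinearMap.snd ℝ _ _)
  map_add' p p' := by
    ext x
    simp only [Prod.fst_add, Prod.snd_add, map_add, _root_.add_apply, _root_.smul_apply,
      LinearMap.compQuadraticMap_apply, LinearMap.comp_apply, LinearMap.add_apply, smul_eq_mul,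
      add_mul]
    ring
  map_smul' r p := by ext x; simp [mul_assoc, mul_add]

lemma invariantForm_apply (α : ℝ) (β : ℂ) (δ : ℝ) (c : Fin 3 → ℂ) (v : Fin 2 → ℂ) :
    invariantForm (α, β, δ) (c, v) =
      α * frobeniusForm (Fin 2) (Fin 2) (mat c) + (β * traceSq (Fin 2) ℝ ℂ (mat c)).re +
        δ * frobeniusForm (Fin 2) Unit (replicateCol Unit v) := rfl

lemma isInvariant_invariantForm (p : ℝ × ℂ × ℝ) : IsInvariant (invariantForm p) := by
  rintro g hg - ⟨c, v⟩ ⟨c', v'⟩ hc hv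
  obtain ⟨α, β, δ⟩ := p
  dsimp only at hc hv
  have inv_eq : g⁻¹ = star g := inv_eq_left_inv (mem_unitaryGroup_iff'.mp hg)
  have isUnit_g : IsUnit g := ⟨⟨g, star g, hg.2, hg.1⟩, rfl⟩
  have inv_mem : g⁻¹ ∈ unitaryGroup (Fin 2) ℂ := inv_eq ▸ Unitary.star_mem hg
  rw [invariantForm_apply, invariantForm_apply, hc, hv, replicateCol_mulVec, traceSq_conj isUnit_g,
    frobeniusForm_mul_unitary inv_mem, frobeniusForm_unitary_mul hg, frobeniusForm_unitary_mul hg]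

end InvariantForms

section Pauli

/-- The coordinates of the traceless matrix `x σ₁ + y σ₂ + z σ₃`, where `σ₁, σ₂, σ₃` are the Pauli
matrices. -/
def pauli (x y z : ℂ) : Fin 3 → ℂ := ![z, x - Complex.I * y, x + Complex.I * y]

lemma mat_pauli (x y z : ℂ) :
    mat (pauli x y z) = !![z, x - Complex.I * y; x + Complex.I * y, -z] := rfl

lemma exists_eq_pauli (c : Fin 3 → ℂ) : ∃ x y z, c = pauli x y z := by
  refine ⟨(c 1 + c 2) / 2, Complex.I * (c 1 - c 2) / 2, c 0, ?_⟩
  ext i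
  fin_cases i
  · rfl
  · change c 1 = (c 1 + c 2) / 2 - Complex.I * (Complex.I * (c 1 - c 2) / 2)
    linear_combination (c 1 - c 2) / 2 * Complex.I_sq
  · change c 2 = (c 1 + c 2) / 2 + Complex.I * (Complex.I * (c 1 - c 2) / 2)
    linear_combination -(c 1 - c 2) / 2 * Complex.I_sq

lemma pauli_add (x y z x' y' z' : ℂ) :
    pauli x y z + pauli x' y' z' = pauli (x + x') (y + y') (z + z') := by
  ext i
  fin_cases i <;> simp [pauli] <;> ring

lemma pauli_sub (x y z x' y' z' : ℂ) :
    pauli x y z - pauli x' y' z' = pauli (x - x') (y - y') (z - z') := by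
  ext i
  fin_cases i <;> simp [pauli] <;> ring

lemma smul_pauli (w x y z : ℂ) : w • pauli x y z = pauli (w * x) (w * y) (w * z) := by
  ext i
  fin_cases i <;> simp [pauli] <;> ring

end Pauli

section Quaternions

/-- The matrix of the quaternion `a + b j`, whose first column is `(a, b)`. The nonzero ones are the
positive real multiples of the elements of SU(2). -/
def quaternionMatrix (a b : ℂ) : Matrix (Fin 2) (Fin 2) ℂ := !![a, -conj b; b, conj a]

lemma quaternionMatrix_mem_unitaryGroup {a b : ℂ} (h : Complex.normSq a + Complex.normSq b = 1) :
    quaternionMatrix a b ∈ unitaryGroup (Fin 2) ℂ := by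
  have norm_eq : a * conj a + b * conj b = 1 := by
    rw [Complex.mul_conj, Complex.mul_conj]
    exact_mod_cast h
  have star_eq : star (quaternionMatrix a b) = !![conj a, conj b; -b, a] := by
    ext i j
    fin_cases i <;> fin_cases j <;> simp [quaternionMatrix, star_apply]
  rw [mem_unitaryGroup_iff', star_eq, quaternionMatrix, mul_fin_two, one_fin_two]
  congr! 5
  all_goals first | ring1 | linear_combination norm_eq

lemma det_quaternionMatrix (a b : ℂ) :
    (quaternionMatrix a b).det = (Complex.normSq a + Complex.normSq b : ℝ) := by
  rw [Complex.ofReal_add, ← Complex.mul_conj, ← Complex.mul_conj, quaternionMatrix, det_fin_two_of]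
  ring

lemma smul_quaternionMatrix (r : ℝ) (a b : ℂ) :
    r • quaternionMatrix a b = quaternionMatrix (r * a) (r * b) := by
  ext i j
  fin_cases i <;> fin_cases j <;> simp [quaternionMatrix]

end Quaternions

namespace IsInvariant

variable {q : QuadraticForm ℝ V}

/-- Stated with an intertwining relation instead of a conjugation, and for multiples of elements of
SU(2), so that it applies without inverses or square roots in the matrix entries. -/
lemma map_quaternionMatrix_mulVec (hq : IsInvariant q) {a b : ℂ} {r : ℝ} (hr : r ≠ 0)
    (hab : Complex.normSq a + Complex.normSq b = r ^ 2) {c c' : Fin 3 → ℂ}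
    (hc : mat c' * quaternionMatrix a b = quaternionMatrix a b * mat c) (v : Fin 2 → ℂ) :
    q (c', quaternionMatrix a b *ᵥ v) = q (c, r • v) := by
  have norm_eq : Complex.normSq ((r⁻¹ : ℝ) * a) + Complex.normSq ((r⁻¹ : ℝ) * b) = 1 := by
    rw [map_mul, map_mul, Complex.normSq_ofReal, ← mul_add, hab]
    field_simp
  set g := r⁻¹ • quaternionMatrix a b with hg
  have g_eq : g = quaternionMatrix ((r⁻¹ : ℝ) * a) ((r⁻¹ : ℝ) * b) := by
    rw [hg, smul_quaternionMatrix]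
  have det_g : g.det = 1 := by rw [g_eq, det_quaternionMatrix, norm_eq, Complex.ofReal_one]
  refine hq g (g_eq ▸ quaternionMatrix_mem_unitaryGroup norm_eq) det_g (c, r • v) _ ?_ ?_
  · have intertwines : g * mat c = mat c' * g := by
      rw [hg, smul_mul_assoc, mul_smul_comm, hc]
    rw [intertwines, mul_nonsing_inv_cancel_right _ _ (by simp [det_g])]
  · rw [hg, smul_mulVec, mulVec_smul, inv_smul_smul₀ hr]

lemma map_eq_add (hq : IsInvariant q) (c : Fin 3 → ℂ) (v : Fin 2 → ℂ) :
    q (c, v) = q (c, 0) + q (0, v) := by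
  have map_neg_right : q (c, -v) = q (c, v) := by
    have neg_one : quaternionMatrix (-1) 0 = -1 := by
      ext i j
      fin_cases i <;> fin_cases j <;> simp [quaternionMatrix]
    simpa [neg_one, neg_mulVec] using hq.map_quaternionMatrix_mulVec (a := -1) (b := 0)
      one_ne_zero (by simp) (by simp [neg_one]) v
  have split := map_add_eq_of_map_sub_eq q (x := (c, 0)) (y := (0, v))
    (by simpa using map_neg_right)
  simpa using split

lemma map_pauli_neg_neg (hq : IsInvariant q) (x y z : ℂ) :
    q (pauli (-x) (-y) z, 0) = q (pauli x y z, 0) := by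
  have intertwines : mat (pauli (-x) (-y) z) * quaternionMatrix Complex.I 0 =
      quaternionMatrix Complex.I 0 * mat (pauli x y z) := by
    ext i j
    fin_cases i <;> fin_cases j <;> simp [mat_pauli, quaternionMatrix] <;> ring
  simpa using hq.map_quaternionMatrix_mulVec one_ne_zero (by simp) intertwines 0

lemma map_pauli_neg_left (hq : IsInvariant q) (x y : ℂ) :
    q (pauli (-x) y 0, 0) = q (pauli x y 0, 0) := by
  have intertwines : mat (pauli (-x) y 0) * quaternionMatrix 0 1 =
      quaternionMatrix 0 1 * mat (pauli x y 0) := by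
    ext i j
    fin_cases i <;> fin_cases j <;> simp [mat_pauli, quaternionMatrix] <;> ring
  simpa using hq.map_quaternionMatrix_mulVec one_ne_zero (by simp) intertwines 0

lemma map_pauli_fst (hq : IsInvariant q) (z : ℂ) : q (pauli z 0 0, 0) = q (pauli 0 0 z, 0) := by
  have intertwines : mat (pauli z 0 0) * quaternionMatrix 1 1 =
      quaternionMatrix 1 1 * mat (pauli 0 0 z) := by
    simp [mat_pauli, quaternionMatrix]
  simpa using hq.map_quaternionMatrix_mulVec (r := √2) (by simp) (by norm_num) intertwines 0

lemma map_pauli_snd (hq : IsInvariant q) (z : ℂ) : q (pauli 0 z 0, 0) = q (pauli 0 0 z, 0) := by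
  have I_mul_mul_I : Complex.I * z * Complex.I = -z := by linear_combination z * Complex.I_sq
  have intertwines : mat (pauli 0 z 0) * quaternionMatrix 1 Complex.I =
      quaternionMatrix 1 Complex.I * mat (pauli 0 0 z) := by
    simp [mat_pauli, quaternionMatrix, I_mul_mul_I]
  simpa using hq.map_quaternionMatrix_mulVec (r := √2) (by simp) (by norm_num) intertwines 0

lemma map_pauli_eq_add_add (hq : IsInvariant q) (x y z : ℂ) :
    q (pauli x y z, 0) = q (pauli 0 0 x, 0) + q (pauli 0 0 y, 0) + q (pauli 0 0 z, 0) := by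
  have split_third : q (pauli x y z, 0) = q (pauli 0 0 z, 0) + q (pauli x y 0, 0) := by
    have split := map_add_eq_of_map_sub_eq q (x := (pauli 0 0 z, 0)) (y := (pauli x y 0, 0))
      (by simpa [pauli_add, pauli_sub] using hq.map_pauli_neg_neg x y z)
    simpa [pauli_add] using split
  have split_first : q (pauli x y 0, 0) = q (pauli 0 y 0, 0) + q (pauli x 0 0, 0) := by
    have split := map_add_eq_of_map_sub_eq q (x := (pauli 0 y 0, 0)) (y := (pauli x 0 0, 0))
      (by simpa [pauli_add, pauli_sub] using hq.map_pauli_neg_left x y)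
    simpa [pauli_add] using split
  rw [split_third, split_first, hq.map_pauli_fst, hq.map_pauli_snd]
  ring

lemma map_zero_left_eq_mul (hq : IsInvariant q) (v : Fin 2 → ℂ) :
    q (0, v) = frobeniusForm (Fin 2) Unit (replicateCol Unit v) * q (0, ![1, 0]) := by
  have norm_eq : frobeniusForm (Fin 2) Unit (replicateCol Unit v) =
      Complex.normSq (v 0) + Complex.normSq (v 1) := by
    simp [frobeniusForm_eq_sum_normSq]
  rw [norm_eq]
  rcases eq_or_ne v 0 with rfl | hv
  · simp [← Prod.zero_eq_mk]
  have normSq_pos : 0 < Complex.normSq (v 0) + Complex.normSq (v 1) := by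
    contrapose! hv
    have nonneg_fst := Complex.normSq_nonneg (v 0)
    have nonneg_snd := Complex.normSq_nonneg (v 1)
    exact funext <| Fin.forall_fin_two.mpr
      ⟨Complex.normSq_eq_zero.mp (by linarith), Complex.normSq_eq_zero.mp (by linarith)⟩
  have first_column : quaternionMatrix (v 0) (v 1) *ᵥ ![1, 0] = v := by
    ext i
    fin_cases i <;> simp [quaternionMatrix]
  have rotate := hq.map_quaternionMatrix_mulVec (c := 0) (c' := 0)
    (Real.sqrt_ne_zero'.mpr normSq_pos) (Real.sq_sqrt normSq_pos.le).symm
    (by simp [mat_zero]) ![1, 0]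
  set r := √(Complex.normSq (v 0) + Complex.normSq (v 1))
  have smul_eq : ((0, r • ![1, 0]) : V) = r • (0, ![1, 0]) := by simp
  rw [first_column, smul_eq, QuadraticMap.map_smul, smul_eq_mul,
    Real.mul_self_sqrt normSq_pos.le] at rotate
  exact rotate

lemma ext {q' : QuadraticForm ℝ V} (hq : IsInvariant q) (hq' : IsInvariant q')
    (h_line : ∀ z : ℂ, q (pauli 0 0 z, 0) = q' (pauli 0 0 z, 0))
    (h_vec : q (0, ![1, 0]) = q' (0, ![1, 0])) : q = q' := by
  refine QuadraticMap.ext fun ⟨c, v⟩ => ?_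
  obtain ⟨x, y, z, rfl⟩ := exists_eq_pauli c
  rw [hq.map_eq_add, hq'.map_eq_add, hq.map_pauli_eq_add_add, hq'.map_pauli_eq_add_add,
    hq.map_zero_left_eq_mul, hq'.map_zero_left_eq_mul, h_line, h_line, h_line, h_vec]

end IsInvariant

section Classification

lemma frobeniusForm_mat_pauli (x y z : ℂ) :
    frobeniusForm (Fin 2) (Fin 2) (mat (pauli x y z)) =
      2 * (Complex.normSq x + Complex.normSq y + Complex.normSq z) := by
  rw [frobeniusForm_eq_sum_normSq, mat_pauli, Fin.sum_univ_two, Fin.sum_univ_two, Fin.sum_univ_two]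
  change Complex.normSq z + Complex.normSq (x + Complex.I * y) +
    (Complex.normSq (x - Complex.I * y) + Complex.normSq (-z)) = _
  rw [Complex.normSq_add, Complex.normSq_sub, Complex.normSq_neg, map_mul, Complex.normSq_I]
  ring

lemma traceSq_mat_pauli (x y z : ℂ) :
    traceSq (Fin 2) ℝ ℂ (mat (pauli x y z)) = 2 * (x ^ 2 + y ^ 2 + z ^ 2) := by
  rw [traceSq_apply, mat_pauli, mul_fin_two, trace_fin_two_of]
  linear_combination -2 * y ^ 2 * Complex.I_sq

lemma invariantForm_pauli (α : ℝ) (β : ℂ) (δ : ℝ) (z : ℂ) :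
    invariantForm (α, β, δ) (pauli 0 0 z, 0) = 2 * (α * Complex.normSq z + (β * z ^ 2).re) := by
  have traceSq_eq : β * (2 * (0 ^ 2 + 0 ^ 2 + z ^ 2)) = (2 : ℝ) * (β * z ^ 2) := by
    push_cast
    ring
  rw [invariantForm_apply, frobeniusForm_mat_pauli, traceSq_mat_pauli, traceSq_eq,
    Complex.re_ofReal_mul, replicateCol_zero, QuadraticMap.map_zero, Complex.normSq_zero]
  ring

lemma invariantForm_vec (α : ℝ) (β : ℂ) (δ : ℝ) :
    invariantForm (α, β, δ) (0, ![1, 0]) = δ := by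
  rw [invariantForm_apply, mat_zero, QuadraticMap.map_zero, QuadraticMap.map_zero,
    frobeniusForm_eq_sum_normSq]
  simp

lemma invariantForm_injective : Function.Injective invariantForm := by
  rw [injective_iff_map_eq_zero]
  rintro ⟨α, β, δ⟩ h
  have line_eq_zero (z : ℂ) : α * Complex.normSq z + (β * z ^ 2).re = 0 := by
    have := invariantForm_pauli α β δ z
    rw [h, _root_.zero_apply] at this
    linarith
  have at_one : α + β.re = 0 := by simpa using line_eq_zero 1
  have at_I : α - β.re = 0 := by simpa [sub_eq_add_neg] using line_eq_zero Complex.I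
  have at_one_add_I : α * 2 - β.im * 2 = 0 := by
    have sq_eq : (1 + Complex.I) ^ 2 = 2 * Complex.I := by linear_combination Complex.I_sq
    have normSq_eq : Complex.normSq (1 + Complex.I) = 2 := by norm_num [Complex.normSq_apply]
    simpa [sq_eq, normSq_eq, sub_eq_add_neg] using line_eq_zero (1 + Complex.I)
  have α_eq_zero : α = 0 := by linarith
  have β_eq_zero : β = 0 := Complex.ext (by simp; linarith) (by simp; linarith)
  have δ_eq_zero : δ = 0 := by rw [← invariantForm_vec α β δ, h, _root_.zero_apply]
  rw [α_eq_zero, β_eq_zero, δ_eq_zero, Prod.mk_zero_zero, Prod.mk_zero_zero]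

lemma invQF_eq_range_invariantForm : invQF = LinearMap.range invariantForm := by
  refine le_antisymm (fun q hq => ?_) ?_
  · obtain ⟨α, β, q_line⟩ := exists_map_complex_smul_eq q ((pauli 0 0 1, 0) : V)
    refine ⟨(α / 2, β / 2, q (0, ![1, 0])), ?_⟩
    refine (isInvariant_invariantForm _).ext hq (fun z => ?_) (invariantForm_vec ..)
    have smul_axis : ((pauli 0 0 z, 0) : V) = z • (pauli 0 0 1, 0) := by simp [smul_pauli]
    rw [invariantForm_pauli, smul_axis, q_line, div_mul_eq_mul_div β, Complex.div_ofNat_re]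
    ring
  · rintro _ ⟨p, rfl⟩
    exact isInvariant_invariantForm p

end Classification

/-- The space of SU(2)-invariant quadratic forms on `sl₂(ℂ) ⊕ ℂ²` has dimension exactly 4. -/
theorem dim_invariant_quadratic_forms_eq_four :
    Module.finrank ℝ ↥invQF = 4 := by
  rw [invQF_eq_range_invariantForm, LinearMap.finrank_range_of_inj invariantForm_injective]
  simp [Complex.finrank_real_complex]

end Stmt9
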